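/- For b ≥ max{c, 2c-1} > 0, μ ∈ [-1,1], and every n ∈ ℕ, the polynomial σ_n^{(b-1,c)}(f_μ, z) = Σ_{k=0}^n (B_{n-k}/B_n)((μ)_k/k!) z^k satisfies (1-z)^μ σ_n^{(b-1,c)}(f_μ, z) ≺ (1-z)^μ on the unit disc; equivalently, |1 - ((1-z) σ_n^{(b-1,c)}(f_μ, z)^{1/μ})| ≤ 1 for μ ≠ 0. -/

import Mathlib

open Complex Metric

/-- Pochhammer symbol (rising factorial). -/
def poch (x : ℝ) (k : ℕ) : ℝ := ∏ i ∈ Finset.range k, (x + i)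

/-- Cesàro normalizing constants `B_0 = 1`, `B_k = ((b)_k/(c)_k)(1+b-c)/b`. -/
noncomputable def cesB (b c : ℝ) : ℕ → ℝ
  | 0 => 1
  | (k + 1) => (poch b (k + 1) / poch c (k + 1)) * (1 + b - c) / b

/-- `σ_n^{(b-1,c)}(f_μ, z) = Σ_{k=0}^n (B_{n-k}/B_n)((μ)_k/k!) z^k`. -/
noncomputable def sigmaMu (b c μ : ℝ) (n : ℕ) (z : ℂ) : ℂ :=
  ∑ k ∈ Finset.range (n + 1),
    (((cesB b c (n - k) / cesB b c n) * (poch μ k / (Nat.factorial k : ℝ)) : ℝ) : ℂ) * z ^ k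

/-- Subordination on the unit disc: `F ≺ G` iff `F = G ∘ ω` for some analytic
`ω : 𝔻 → 𝔻` with `ω(0) = 0`. -/
def Subord (F G : ℂ → ℂ) : Prop :=
  ∃ ω : ℂ → ℂ, DifferentiableOn ℂ ω (ball (0 : ℂ) 1) ∧ ω 0 = 0 ∧
    (∀ z ∈ ball (0 : ℂ) 1, ω z ∈ ball (0 : ℂ) 1) ∧
    ∀ z ∈ ball (0 : ℂ) 1, F z = G (ω z)

/-!
For `μ ≠ 0` put `P = σ_n` and `ω = 1 - (1 - z) P ^ μ⁻¹`, so that `(1 - z) ^ μ P = (1 - ω) ^ μ`.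
Then `ω' = Q P ^ (μ⁻¹ - 1)`, where the polynomial `Q` has the nonnegative coefficients
`(A k - A (k + 1)) (μ + 1)_k / k!` with `A k = B (n - k) / B n`. The modulus of `P ^ (μ⁻¹ - 1)` on
a circle about `0` is largest at the positive point: for `μ < 0` the exponent is negative and the
nonconstant coefficients of `P` are nonpositive, and for `μ > 0` the exponent and all coefficients
are nonnegative. Hence `|ω' z| ≤ ω' |z|`, and integration along the radius gives
`|ω z| ≤ ω |z| < 1`. The power `P ^ μ⁻¹` exists because `P` has no zeros in the disc: a real
polynomial with positive constant term, nonpositive other coefficients and nonnegative value at `1`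
has none, and this applies to `P` for `μ < 0` and to `(1 - X) P` for `μ > 0`.
-/

open Polynomial

theorem norm_le_of_norm_fderiv_le {E F : Type*} [NormedAddCommGroup E] [NormedSpace ℝ E]
    [NormedAddCommGroup F] [NormedSpace ℝ F] {f : E → F} {f' : E → E →L[ℝ] F} {B B' : ℝ → ℝ}
    {r : ℝ} (hf : ∀ x ∈ ball (0 : E) r, HasFDerivAt f (f' x) x)
    (hB : ∀ t ∈ Set.Ico 0 r, HasDerivAt B (B' t) t) (h0 : ‖f 0‖ ≤ B 0)
    (hle : ∀ x ∈ ball (0 : E) r, ‖f' x‖ ≤ B' ‖x‖) {x : E} (hx : x ∈ ball (0 : E) r) :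
    ‖f x‖ ≤ B ‖x‖ := by
  have norm_smul_x {t : ℝ} (ht : 0 ≤ t) : ‖t • x‖ = t * ‖x‖ := by
    rw [norm_smul, Real.norm_of_nonneg ht]
  have smul_mem {t : ℝ} (ht : t ∈ Set.Icc (0 : ℝ) 1) : t • x ∈ ball (0 : E) r := by
    rw [mem_ball_zero_iff, norm_smul_x ht.1]
    exact (mul_le_of_le_one_left (norm_nonneg x) ht.2).trans_lt (mem_ball_zero_iff.1 hx)
  have hasDerivAt_f {t : ℝ} (ht : t ∈ Set.Icc (0 : ℝ) 1) :
      HasDerivAt (fun t : ℝ => f (t • x)) (f' (t • x) x) t := by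
    simpa [Function.comp_def] using
      (hf _ (smul_mem ht)).comp_hasDerivAt t ((hasDerivAt_id t).smul_const x)
  have hasDerivAt_B {t : ℝ} (ht : t ∈ Set.Icc (0 : ℝ) 1) :
      HasDerivAt (fun t : ℝ => B (t * ‖x‖)) (B' (t * ‖x‖) * ‖x‖) t := by
    have hmem : t * ‖x‖ ∈ Set.Ico 0 r :=
      ⟨mul_nonneg ht.1 (norm_nonneg x), by simpa [norm_smul_x ht.1] using smul_mem ht⟩
    simpa [Function.comp_def] using (hB _ hmem).comp t ((hasDerivAt_id t).mul_const ‖x‖)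
  have norm_deriv_le (t : ℝ) (ht : t ∈ Set.Ico (0 : ℝ) 1) :
      ‖f' (t • x) x‖ ≤ B' (t * ‖x‖) * ‖x‖ := by
    have := hle _ (smul_mem (Set.Ico_subset_Icc_self ht))
    rw [norm_smul_x ht.1] at this
    exact (f' (t • x)).le_of_opNorm_le this x
  simpa using image_norm_le_of_norm_deriv_right_le_deriv_boundary' (a := 0) (b := 1)
    (fun t ht => (hasDerivAt_f ht).continuousAt.continuousWithinAt)
    (fun t ht => (hasDerivAt_f (Set.Ico_subset_Icc_self ht)).hasDerivWithinAt)
    (by simpa using h0)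
    (fun t ht => (hasDerivAt_B ht).continuousAt.continuousWithinAt)
    (fun t ht => (hasDerivAt_B (Set.Ico_subset_Icc_self ht)).hasDerivWithinAt)
    norm_deriv_le (Set.right_mem_Icc.2 zero_le_one)

theorem exists_hasDerivAt_logDeriv_exp_eq {f : ℂ → ℂ} {c w : ℂ} {r : ℝ}
    (hf : DifferentiableOn ℂ f (ball c r)) (hne : ∀ z ∈ ball c r, f z ≠ 0) (hw : exp w = f c) :
    ∃ L : ℂ → ℂ, L c = w ∧
      ∀ z ∈ ball c r, HasDerivAt L (logDeriv f z) z ∧ exp (L z) = f z := by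
  have hlogDeriv : DifferentiableOn ℂ (logDeriv f) (ball c r) :=
    (hf.deriv isOpen_ball).div hf hne
  obtain ⟨L, hLc, hL⟩ := hlogDeriv.isExactOn_ball.with_val_at c w
  refine ⟨L, hLc, fun z hz => ⟨hL z hz, ?_⟩⟩
  have hasDerivAt_quot (z : ℂ) (hz : z ∈ ball c r) :
      HasDerivAt (fun z => exp (L z) / f z) 0 z := by
    refine ((hL z hz).cexp.div (hf.differentiableAt (isOpen_ball.mem_nhds hz)).hasDerivAt
      (hne z hz)).congr_deriv ?_
    have := hne z hz
    rw [logDeriv_apply]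
    field_simp
    ring
  have hc : c ∈ ball c r := mem_ball_self (dist_nonneg.trans_lt (mem_ball.1 hz))
  have quot_eq : exp (L z) / f z = exp (L c) / f c :=
    isOpen_ball.is_const_of_deriv_eq_zero (convex_ball c r).isPreconnected
      (fun z hz => (hasDerivAt_quot z hz).differentiableAt.differentiableWithinAt)
      (fun z hz => (hasDerivAt_quot z hz).deriv) hz hc
  rwa [hLc, hw, div_self (hne c hc), div_eq_one_iff_eq (hne z hz)] at quot_eq

theorem log_exp_eq_of_isPreconnected {X : Type*} [TopologicalSpace X] {s : Set X}
    (hs : IsPreconnected s) {f : X → ℂ} (hf : ContinuousOn f s)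
    (hslit : ∀ x ∈ s, exp (f x) ∈ slitPlane) {x₀ : X} (hx₀ : x₀ ∈ s)
    (h₀ : log (exp (f x₀)) = f x₀) {x : X} (hx : x ∈ s) : log (exp (f x)) = f x :=
  isCoveringMap_exp.eqOn_of_comp_eqOn hs (hf.cexp.clog hslit) hf
    (fun _ _ => Subtype.ext (exp_log (exp_ne_zero _))) hx₀ h₀ hx

theorem subord_one_sub_cpow_of_exp {F M : ℂ → ℂ} {μ : ℂ}
    (hM : DifferentiableOn ℂ M (ball 0 1)) (hM0 : M 0 = 0)
    (hlt : ∀ z ∈ ball (0 : ℂ) 1, ‖1 - exp (M z)‖ < 1)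
    (hF : ∀ z ∈ ball (0 : ℂ) 1, F z = exp (M z * μ)) :
    Subord F (fun z => (1 - z) ^ μ) := by
  have exp_mem_slitPlane (z : ℂ) (hz : z ∈ ball (0 : ℂ) 1) : exp (M z) ∈ slitPlane :=
    ball_one_subset_slitPlane (by rw [mem_ball_comm, mem_ball, dist_eq]; exact hlt z hz)
  refine ⟨fun z => 1 - exp (M z), hM.cexp.const_sub 1, by simp [hM0],
    fun z hz => mem_ball_zero_iff.2 (hlt z hz), fun z hz => ?_⟩
  have log_exp_M : log (exp (M z)) = M z :=
    log_exp_eq_of_isPreconnected (convex_ball (0 : ℂ) 1).isPreconnected hM.continuousOn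
      exp_mem_slitPlane (mem_ball_self one_pos) (by simp [hM0]) hz
  beta_reduce
  rw [hF z hz, sub_sub_cancel, cpow_def_of_ne_zero (exp_ne_zero _), log_exp_M]

section RealCoefficients

variable {A : Type*} [NormedRing A] [NormedAlgebra ℝ A] [NormOneClass A] {P : ℝ[X]}

theorem norm_aeval_le_eval_norm (hP : ∀ k, 0 ≤ P.coeff k) (z : A) :
    ‖aeval z P‖ ≤ P.eval ‖z‖ := by
  rw [aeval_eq_sum_range, eval_eq_sum_range]
  refine norm_sum_le_of_le _ fun k _ => ?_
  rw [norm_smul, Real.norm_of_nonneg (hP k)]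
  exact mul_le_mul_of_nonneg_left (norm_pow_le z k) (hP k)

theorem eval_norm_le_norm_aeval (hP : ∀ k, P.coeff (k + 1) ≤ 0) (z : A) :
    P.eval ‖z‖ ≤ ‖aeval z P‖ := by
  have hcoeff (k : ℕ) : 0 ≤ (C (P.coeff 0) - P).coeff k := by
    rcases k with _ | k
    · simp
    · simpa [coeff_C] using hP k
  have hle : ‖algebraMap ℝ A (P.coeff 0) - aeval z P‖ ≤ P.coeff 0 - P.eval ‖z‖ := by
    simpa using norm_aeval_le_eval_norm hcoeff z
  calc P.eval ‖z‖
      ≤ ‖algebraMap ℝ A (P.coeff 0)‖ - ‖algebraMap ℝ A (P.coeff 0) - aeval z P‖ := by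
        rw [norm_algebraMap']
        linarith [Real.le_norm_self (P.coeff 0)]
    _ ≤ ‖aeval z P‖ := by linarith [norm_sub_norm_le (algebraMap ℝ A (P.coeff 0)) (aeval z P)]

theorem monotoneOn_eval_of_coeff_nonneg (hP : ∀ k, 0 ≤ P.coeff k) :
    MonotoneOn P.eval (Set.Ici 0) := by
  intro x hx y _ hxy
  simp only [eval_eq_sum_range]
  exact Finset.sum_le_sum fun k _ =>
    mul_le_mul_of_nonneg_left (pow_le_pow_left₀ hx hxy k) (hP k)

theorem eval_pos_of_coeff_nonpos (hP0 : 0 < P.coeff 0) (hP : ∀ k, P.coeff (k + 1) ≤ 0)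
    (hP1 : 0 ≤ P.eval 1) {x : ℝ} (hx0 : 0 ≤ x) (hx1 : x < 1) : 0 < P.eval x := by
  have eval_eq (y : ℝ) : P.eval y = P.coeff 0 - y * (-P.divX).eval y := by
    conv_lhs => rw [← X_mul_divX_add P]
    simp only [eval_add, eval_mul, eval_X, eval_C, eval_neg]
    ring
  have hmono : (-P.divX).eval x ≤ (-P.divX).eval 1 :=
    monotoneOn_eval_of_coeff_nonneg (fun k => by simpa using hP k) hx0
      (Set.mem_Ici.2 zero_le_one) hx1.le
  have hle : (-P.divX).eval 1 ≤ P.coeff 0 := by linarith [eval_eq 1]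
  rw [eval_eq x, sub_pos]
  calc x * (-P.divX).eval x ≤ x * P.coeff 0 := mul_le_mul_of_nonneg_left (hmono.trans hle) hx0
    _ < P.coeff 0 := mul_lt_of_lt_one_left hP0 hx1

theorem aeval_ne_zero_of_coeff_nonpos (hP0 : 0 < P.coeff 0) (hP : ∀ k, P.coeff (k + 1) ≤ 0)
    (hP1 : 0 ≤ P.eval 1) {z : A} (hz : ‖z‖ < 1) : aeval z P ≠ 0 :=
  norm_pos_iff.1 ((eval_pos_of_coeff_nonpos hP0 hP hP1 (norm_nonneg z) hz).trans_le
    (eval_norm_le_norm_aeval hP z))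

theorem eval_pos_of_coeff_nonneg (hP0 : 0 < P.coeff 0) (hP : ∀ k, 0 ≤ P.coeff k) {x : ℝ}
    (hx : 0 ≤ x) : 0 < P.eval x := by
  rw [coeff_zero_eq_eval_zero] at hP0
  exact hP0.trans_le (monotoneOn_eval_of_coeff_nonneg hP Set.self_mem_Ici hx hx)

end RealCoefficients

/-- The polynomial `Q` with `ω' = Q * P ^ (μ⁻¹ - 1)` for `ω = 1 - (1 - X) * P ^ μ⁻¹`. -/
noncomputable def derivFactor (μ : ℝ) (P : ℝ[X]) : ℝ[X] :=
  P - C μ⁻¹ * ((1 - X) * derivative P)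

/-- `P` has no zeros in the unit disc, and on each circle about `0` inside it the modulus of
`P ^ s` is largest at the positive point of the circle. -/
structure IsRadiallyDominated (s : ℝ) (P : ℝ[X]) : Prop where
  aeval_ne_zero : ∀ z ∈ ball (0 : ℂ) 1, aeval z P ≠ 0
  eval_pos : ∀ r ∈ Set.Ico (0 : ℝ) 1, 0 < P.eval r
  norm_aeval_rpow_le : ∀ z ∈ ball (0 : ℂ) 1, ‖aeval z P‖ ^ s ≤ P.eval ‖z‖ ^ s

section Subordination

variable {μ : ℝ} {P : ℝ[X]}

theorem hasDerivAt_one_sub_mul_rpow {x : ℝ} (hx : 0 < P.eval x) :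
    HasDerivAt (fun x => 1 - (1 - x) * P.eval x ^ μ⁻¹)
      ((derivFactor μ P).eval x * P.eval x ^ (μ⁻¹ - 1)) x := by
  have := ((((hasDerivAt_id x).const_sub 1).mul
    ((P.hasDerivAt x).rpow_const (p := μ⁻¹) (Or.inl hx.ne'))).const_sub 1)
  refine this.congr_deriv ?_
  have rpow_eq : P.eval x ^ μ⁻¹ = P.eval x ^ (μ⁻¹ - 1) * P.eval x := by
    rw [Real.rpow_sub_one hx.ne', div_mul_cancel₀ _ hx.ne']
  simp only [derivFactor, eval_sub, eval_mul, eval_C, eval_one, eval_X, id, rpow_eq]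
  ring

theorem hasDerivAt_one_sub_mul_exp {L : ℂ → ℂ} {z : ℂ} (hz : aeval z P ≠ 0)
    (hL : HasDerivAt L (aeval z (derivative P) / aeval z P) z) (hexp : exp (L z) = aeval z P) :
    HasDerivAt (fun z => 1 - (1 - z) * exp (μ⁻¹ * L z))
      (aeval z (derivFactor μ P) * exp ((μ⁻¹ - 1 : ℝ) * L z)) z := by
  have := ((((hasDerivAt_id z).const_sub 1).mul (hL.const_mul ((μ⁻¹ : ℝ) : ℂ)).cexp).const_sub 1)
  refine this.congr_deriv ?_
  have exp_eq : exp (μ⁻¹ * L z) = exp ((μ⁻¹ - 1 : ℝ) * L z) * aeval z P := by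
    rw [← hexp, ← exp_add]
    push_cast
    ring_nf
  simp only [derivFactor, map_sub, map_mul, map_one, aeval_C, aeval_X, id,
    coe_algebraMap]
  rw [exp_eq]
  field_simp
  ring

theorem norm_exp_ofReal_mul_of_exp_eq {w v : ℂ} (h : exp w = v) (s : ℝ) :
    ‖exp (s * w)‖ = ‖v‖ ^ s := by
  rw [← h, norm_exp, norm_exp, ← Real.exp_mul, re_ofReal_mul, mul_comm]

theorem norm_one_sub_mul_exp_le (hP0 : P.coeff 0 = 1)
    (hdom : IsRadiallyDominated (μ⁻¹ - 1) P) (hQ : ∀ k, 0 ≤ (derivFactor μ P).coeff k)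
    {L : ℂ → ℂ} (hL0 : L 0 = 0)
    (hL : ∀ z ∈ ball (0 : ℂ) 1,
      HasDerivAt L (aeval z (derivative P) / aeval z P) z ∧ exp (L z) = aeval z P)
    {z : ℂ} (hz : z ∈ ball (0 : ℂ) 1) :
    ‖1 - (1 - z) * exp (μ⁻¹ * L z)‖ ≤ 1 - (1 - ‖z‖) * P.eval ‖z‖ ^ μ⁻¹ := by
  refine norm_le_of_norm_fderiv_le
    (f := fun z => 1 - (1 - z) * exp (μ⁻¹ * L z)) (B := fun x => 1 - (1 - x) * P.eval x ^ μ⁻¹)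
    (fun w hw => ((hasDerivAt_one_sub_mul_exp (hdom.aeval_ne_zero w hw) (hL w hw).1
      (hL w hw).2).hasFDerivAt.restrictScalars ℝ))
    (fun r hr => hasDerivAt_one_sub_mul_rpow (hdom.eval_pos r hr))
    (by simp [hL0, ← coeff_zero_eq_eval_zero, hP0]) (fun w hw => ?_) hz
  rw [ContinuousLinearMap.norm_restrictScalars, ContinuousLinearMap.norm_toSpanSingleton,
    norm_mul, norm_exp_ofReal_mul_of_exp_eq (hL w hw).2]
  have hQw := norm_aeval_le_eval_norm hQ w
  exact mul_le_mul hQw (hdom.norm_aeval_rpow_le w hw) (by positivity)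
    ((norm_nonneg _).trans hQw)

theorem subord_of_isRadiallyDominated (hμ : μ ≠ 0) (hP0 : P.coeff 0 = 1)
    (hdom : IsRadiallyDominated (μ⁻¹ - 1) P) (hQ : ∀ k, 0 ≤ (derivFactor μ P).coeff k) :
    Subord (fun z => (1 - z) ^ (μ : ℂ) * aeval z P) (fun z => (1 - z) ^ (μ : ℂ)) := by
  obtain ⟨L, hL0, hL⟩ := exists_hasDerivAt_logDeriv_exp_eq (w := 0)
    P.differentiable_aeval.differentiableOn hdom.aeval_ne_zero
    (by simp [← coeff_zero_eq_aeval_zero', hP0])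
  simp only [logDeriv_apply, Polynomial.deriv_aeval] at hL
  have one_sub_mem {z : ℂ} (hz : z ∈ ball (0 : ℂ) 1) : 1 - z ∈ slitPlane := by
    simpa [sub_eq_add_neg] using
      mem_slitPlane_of_norm_lt_one (z := -z) (by simpa using hz)
  have exp_log_add {z : ℂ} (hz : z ∈ ball (0 : ℂ) 1) :
      exp (log (1 - z) + μ⁻¹ * L z) = (1 - z) * exp (μ⁻¹ * L z) := by
    rw [exp_add, exp_log (slitPlane_ne_zero (one_sub_mem hz))]
  refine subord_one_sub_cpow_of_exp (M := fun z => log (1 - z) + μ⁻¹ * L z)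
    (fun z hz => ?_) (by simp [hL0]) (fun z hz => ?_) (fun z hz => ?_)
  · exact (((differentiableAt_id.const_sub 1).clog (one_sub_mem hz)).add
      ((hL z hz).1.differentiableAt.const_mul _)).differentiableWithinAt
  · have hz1 : ‖z‖ < 1 := mem_ball_zero_iff.1 hz
    have hpos : 0 < (1 - ‖z‖) * P.eval ‖z‖ ^ μ⁻¹ :=
      mul_pos (sub_pos.2 hz1) (Real.rpow_pos_of_pos (hdom.eval_pos _ ⟨norm_nonneg z, hz1⟩) _)
    rw [exp_log_add hz]
    exact (norm_one_sub_mul_exp_le hP0 hdom hQ hL0 hL hz).trans_lt (sub_lt_self 1 hpos)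
  · have hμ' : (μ : ℂ) ≠ 0 := ofReal_ne_zero.2 hμ
    rw [cpow_def_of_ne_zero (slitPlane_ne_zero (one_sub_mem hz)), ← (hL z hz).2, ← exp_add]
    congr 1
    push_cast
    field_simp

end Subordination

section Multichoose

open Ring

theorem sum_range_succ_multichoose {R : Type*} [NonAssocSemiring R] [Pow R ℕ] [NatPowAssoc R]
    [BinomialRing R] (x : R) (n : ℕ) :
    ∑ k ∈ Finset.range (n + 1), multichoose x k = multichoose (x + 1) n := by
  induction n with
  | zero => simp
  | succ n ih => rw [Finset.sum_range_succ, ih, multichoose_succ_succ, add_comm]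

section Field

variable {K : Type*} [Field K] [CharZero K] [BinomialRing K]

theorem multichoose_eq_eval_ascPochhammer_div (x : K) (k : ℕ) :
    multichoose x k = (ascPochhammer K k).eval x / k.factorial := by
  rw [eq_div_iff (Nat.cast_ne_zero.2 k.factorial_ne_zero), ← ascPochhammer_smeval_eq_eval,
    ascPochhammer_smeval_cast, ← factorial_nsmul_multichoose_eq_ascPochhammer, nsmul_eq_mul,
    mul_comm]

theorem succ_mul_multichoose_succ (x : K) (k : ℕ) :
    (k + 1) * multichoose x (k + 1) = x * multichoose (x + 1) k := by
  have hk : (k + 1 : K) ≠ 0 := Nat.cast_add_one_ne_zero k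
  simp only [multichoose_eq_eval_ascPochhammer_div, ascPochhammer_succ_left, eval_mul, eval_X,
    eval_comp, eval_add, eval_one, Nat.factorial_succ, Nat.cast_mul, Nat.cast_succ]
  field_simp

theorem succ_mul_multichoose_succ' (x : K) (k : ℕ) :
    (k + 1) * multichoose x (k + 1) = (x + k) * multichoose x k := by
  have hk : (k + 1 : K) ≠ 0 := Nat.cast_add_one_ne_zero k
  simp only [multichoose_eq_eval_ascPochhammer_div, ascPochhammer_succ_eval, Nat.factorial_succ,
    Nat.cast_mul, Nat.cast_succ]
  field_simp

end Field

section OrderedField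

variable {K : Type*} [Field K] [LinearOrder K] [IsStrictOrderedRing K] [BinomialRing K] {x : K}

theorem multichoose_nonneg (hx : 0 ≤ x) (k : ℕ) : 0 ≤ multichoose x k := by
  induction k with
  | zero => simp
  | succ k ih =>
    refine nonneg_of_mul_nonneg_right (a := (k + 1 : K)) ?_ (by positivity)
    rw [succ_mul_multichoose_succ']
    positivity

theorem multichoose_succ_nonpos (hx : -1 ≤ x) (hx0 : x ≤ 0) (k : ℕ) :
    multichoose x (k + 1) ≤ 0 := by
  refine nonpos_of_mul_nonpos_right (a := (k + 1 : K)) ?_ (by positivity)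
  rw [succ_mul_multichoose_succ]
  exact mul_nonpos_of_nonpos_of_nonneg hx0 (multichoose_nonneg (by linarith) k)

theorem multichoose_succ_le (hx0 : 0 ≤ x) (hx1 : x ≤ 1) (k : ℕ) :
    multichoose x (k + 1) ≤ multichoose x k := by
  have pascal := multichoose_succ_succ (x - 1) k
  rw [sub_add_cancel] at pascal
  rw [pascal]
  exact add_le_of_nonpos_left (multichoose_succ_nonpos (by linarith) (by linarith) k)

end OrderedField

end Multichoose

section Weighted

open Ring

variable {μ : ℝ} {A : ℕ → ℝ} {P : ℝ[X]}

theorem coeff_zero_one_sub_X_mul {R : Type*} [Ring R] (p : R[X]) :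
    ((1 - X) * p).coeff 0 = p.coeff 0 := by
  simp [sub_mul]

theorem coeff_succ_one_sub_X_mul {R : Type*} [Ring R] (p : R[X]) (k : ℕ) :
    ((1 - X) * p).coeff (k + 1) = p.coeff (k + 1) - p.coeff k := by
  simp [sub_mul, coeff_X_mul]

theorem coeff_derivFactor (hμ : μ ≠ 0) (hP : ∀ k, P.coeff k = A k * multichoose μ k) (k : ℕ) :
    (derivFactor μ P).coeff k = (A k - A (k + 1)) * multichoose (μ + 1) k := by
  have coeff_one_sub_X_mul_derivative : ((1 - X) * derivative P).coeff k =
      A (k + 1) * ((k + 1) * multichoose μ (k + 1)) - A k * (k * multichoose μ k) := by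
    rcases k with _ | k
    · simp [coeff_derivative, hP]
    · simp only [coeff_succ_one_sub_X_mul, coeff_derivative, hP]
      push_cast
      ring
  have hrec := succ_mul_multichoose_succ' μ k
  rw [succ_mul_multichoose_succ] at hrec
  rw [derivFactor, coeff_sub, coeff_C_mul, coeff_one_sub_X_mul_derivative, hP,
    succ_mul_multichoose_succ]
  field_simp
  linear_combination (-A k) * hrec

theorem coeff_derivFactor_nonneg (hμ0 : μ ≠ 0) (hμ : -1 ≤ μ) (hA : Antitone A)
    (hP : ∀ k, P.coeff k = A k * multichoose μ k) (k : ℕ) :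
    0 ≤ (derivFactor μ P).coeff k := by
  rw [coeff_derivFactor hμ0 hP]
  exact mul_nonneg (sub_nonneg.2 (hA k.le_succ)) (multichoose_nonneg (by linarith) k)

theorem eval_one_nonneg_of_coeff_eq (hμ : -1 ≤ μ) (hμ0 : μ ≤ 0) (hA0 : A 0 = 1) (hA : Antitone A)
    (hP : ∀ k, P.coeff k = A k * multichoose μ k) : 0 ≤ P.eval 1 := by
  have le_coeff (k : ℕ) : multichoose μ k ≤ P.coeff k := by
    rw [hP]
    rcases k with _ | k
    · simp [hA0]
    · exact le_mul_of_le_one_left (multichoose_succ_nonpos hμ hμ0 k) (hA0 ▸ hA (Nat.zero_le _))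
  calc 0 ≤ multichoose (μ + 1) P.natDegree := multichoose_nonneg (by linarith) _
    _ = ∑ k ∈ Finset.range (P.natDegree + 1), multichoose μ k :=
        (sum_range_succ_multichoose μ _).symm
    _ ≤ ∑ k ∈ Finset.range (P.natDegree + 1), P.coeff k := Finset.sum_le_sum fun k _ => le_coeff k
    _ = P.eval 1 := by simp [eval_eq_sum_range]

theorem isRadiallyDominated_of_coeff_succ_nonpos {s : ℝ} (hs : s ≤ 0) (hP0 : 0 < P.coeff 0)
    (hP : ∀ k, P.coeff (k + 1) ≤ 0) (hP1 : 0 ≤ P.eval 1) : IsRadiallyDominated s P := by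
  have eval_pos (r : ℝ) (hr : r ∈ Set.Ico (0 : ℝ) 1) : 0 < P.eval r :=
    eval_pos_of_coeff_nonpos hP0 hP hP1 hr.1 hr.2
  exact {
    aeval_ne_zero := fun z hz =>
      aeval_ne_zero_of_coeff_nonpos hP0 hP hP1 (mem_ball_zero_iff.1 hz)
    eval_pos := eval_pos
    norm_aeval_rpow_le := fun z hz =>
      Real.rpow_le_rpow_of_nonpos (eval_pos _ ⟨norm_nonneg z, mem_ball_zero_iff.1 hz⟩)
        (eval_norm_le_norm_aeval hP z) hs }

theorem isRadiallyDominated_of_antitone_coeff {s : ℝ} (hs : 0 ≤ s) (hP0 : 0 < P.coeff 0)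
    (hP : Antitone P.coeff) : IsRadiallyDominated s P := by
  have coeff_nonneg (k : ℕ) : 0 ≤ P.coeff k := by
    rw [← P.coeff_eq_zero_of_natDegree_lt (lt_of_lt_of_le P.natDegree.lt_succ_self
      (le_max_right k _))]
    exact hP (le_max_left _ _)
  have one_sub_X_mul_ne_zero (z : ℂ) (hz : z ∈ ball (0 : ℂ) 1) : aeval z ((1 - X) * P) ≠ 0 :=
    aeval_ne_zero_of_coeff_nonpos (by rwa [coeff_zero_one_sub_X_mul])
      (fun k => by rw [coeff_succ_one_sub_X_mul]; exact sub_nonpos.2 (hP k.le_succ)) (by simp)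
      (mem_ball_zero_iff.1 hz)
  exact {
    aeval_ne_zero := fun z hz h => one_sub_X_mul_ne_zero z hz (by simp [h])
    eval_pos := fun r hr => eval_pos_of_coeff_nonneg hP0 coeff_nonneg hr.1
    norm_aeval_rpow_le := fun z _ =>
      Real.rpow_le_rpow (norm_nonneg _) (norm_aeval_le_eval_norm coeff_nonneg z) hs }

theorem isRadiallyDominated_of_coeff_eq (hμ0 : μ ≠ 0) (hμ : μ ∈ Set.Icc (-1) 1) (hA0 : A 0 = 1)
    (hA : Antitone A) (hA_nonneg : ∀ k, 0 ≤ A k)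
    (hP : ∀ k, P.coeff k = A k * multichoose μ k) : IsRadiallyDominated (μ⁻¹ - 1) P := by
  have hP0 : 0 < P.coeff 0 := by simp [hP, hA0]
  rcases hμ0.lt_or_gt with hneg | hpos
  · refine isRadiallyDominated_of_coeff_succ_nonpos (by linarith [inv_lt_zero.2 hneg]) hP0
      (fun k => ?_) (eval_one_nonneg_of_coeff_eq hμ.1 hneg.le hA0 hA hP)
    rw [hP]
    exact mul_nonpos_of_nonneg_of_nonpos (hA_nonneg _) (multichoose_succ_nonpos hμ.1 hneg.le k)
  · refine isRadiallyDominated_of_antitone_coeff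
      (sub_nonneg.2 ((one_le_inv₀ hpos).2 hμ.2)) hP0 (antitone_nat_of_succ_le fun k => ?_)
    rw [hP, hP]
    exact mul_le_mul (hA k.le_succ) (multichoose_succ_le hpos.le hμ.2 k)
      (multichoose_nonneg hpos.le _) (hA_nonneg k)

theorem subord_of_antitone_weights (hμ : μ ∈ Set.Icc (-1) 1) (hA0 : A 0 = 1)
    (hA : Antitone A) (hA_nonneg : ∀ k, 0 ≤ A k)
    (hP : ∀ k, P.coeff k = A k * multichoose μ k) :
    Subord (fun z => (1 - z) ^ (μ : ℂ) * aeval z P) (fun z => (1 - z) ^ (μ : ℂ)) := by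
  rcases eq_or_ne μ 0 with rfl | hμ0
  · have P_eq_one : P = 1 := by
      ext (_ | k) <;> simp [hP, hA0, coeff_one]
    exact ⟨id, differentiableOn_id, rfl, fun _ hz => hz, by simp [P_eq_one]⟩
  · exact subord_of_isRadiallyDominated hμ0 (by simp [hP, hA0])
      (isRadiallyDominated_of_coeff_eq hμ0 hμ hA0 hA hA_nonneg hP)
      (coeff_derivFactor_nonneg hμ0 hμ.1 hA hP)

end Weighted

section Cesaro

theorem poch_succ (x : ℝ) (k : ℕ) : poch x (k + 1) = poch x k * (x + k) :=
  Finset.prod_range_succ _ _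

theorem poch_eq_eval_ascPochhammer (x : ℝ) (k : ℕ) : poch x k = (ascPochhammer ℝ k).eval x := by
  induction k with
  | zero => simp [poch]
  | succ k ih => rw [ascPochhammer_succ_eval, ← ih, poch_succ]

theorem poch_div_factorial (x : ℝ) (k : ℕ) : poch x k / k.factorial = Ring.multichoose x k := by
  rw [multichoose_eq_eval_ascPochhammer_div, poch_eq_eval_ascPochhammer]

theorem poch_pos {x : ℝ} (hx : 0 < x) (k : ℕ) : 0 < poch x k :=
  Finset.prod_pos fun i _ => by positivity

variable {b c : ℝ}

theorem cesB_pos (hc : 0 < c) (hcb : c ≤ b) (k : ℕ) : 0 < cesB b c k := by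
  have hb : 0 < b := hc.trans_le hcb
  rcases k with _ | k
  · exact one_pos
  · have hbc : 0 < 1 + b - c := by linarith
    exact div_pos (mul_pos (div_pos (poch_pos hb _) (poch_pos hc _)) hbc) hb

theorem cesB_one (hb : b ≠ 0) : cesB b c 1 = (1 + b - c) / c := by
  simp only [cesB, poch, zero_add, Finset.prod_range_one, Nat.cast_zero, add_zero]
  field_simp

theorem cesB_add_two (k : ℕ) :
    cesB b c (k + 2) = cesB b c (k + 1) * ((b + (k + 1 : ℕ)) / (c + (k + 1 : ℕ))) := by
  simp only [cesB, poch_succ _ (k + 1), mul_div_mul_comm]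
  ring

theorem monotone_cesB (hc : 0 < c) (hcb : c ≤ b) (hcb' : 2 * c - 1 ≤ b) :
    Monotone (cesB b c) := by
  refine monotone_nat_of_le_succ fun k => ?_
  rcases k with _ | k
  · rw [cesB_one (hc.trans_le hcb).ne', cesB, le_div_iff₀ hc]
    linarith
  · rw [cesB_add_two]
    refine le_mul_of_one_le_right (cesB_pos hc hcb _).le ?_
    rw [le_div_iff₀ (by positivity)]
    linarith

/-- The weights `B (n - k) / B n` of the `n`-th Cesàro-type mean, extended by zero to `k > n`,
where the truncated subtraction would give `B 0 / B n`. -/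
noncomputable def meanWeight (B : ℕ → ℝ) (n k : ℕ) : ℝ :=
  if k ≤ n then B (n - k) / B n else 0

variable {B : ℕ → ℝ} {n : ℕ}

theorem meanWeight_zero (hB : B n ≠ 0) : meanWeight B n 0 = 1 := by
  simp [meanWeight, hB]

theorem meanWeight_nonneg (hB : ∀ k, 0 ≤ B k) (k : ℕ) : 0 ≤ meanWeight B n k := by
  unfold meanWeight
  split_ifs
  · exact div_nonneg (hB _) (hB _)
  · exact le_rfl

theorem antitone_meanWeight (hB : ∀ k, 0 ≤ B k) (hmono : Monotone B) :
    Antitone (meanWeight B n) := by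
  intro i j hij
  by_cases hj : j ≤ n
  · rw [meanWeight, meanWeight, if_pos hj, if_pos (hij.trans hj)]
    exact div_le_div_of_nonneg_right (hmono (Nat.sub_le_sub_left hij n)) (hB n)
  · rw [meanWeight, if_neg hj]
    exact meanWeight_nonneg hB i

/-- The Cesàro-type mean `σ_n` of `f_μ` as a polynomial. -/
noncomputable def meanPoly (B : ℕ → ℝ) (μ : ℝ) (n : ℕ) : ℝ[X] :=
  ∑ k ∈ Finset.range (n + 1), monomial k (meanWeight B n k * Ring.multichoose μ k)

theorem coeff_meanPoly (μ : ℝ) (k : ℕ) :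
    (meanPoly B μ n).coeff k = meanWeight B n k * Ring.multichoose μ k := by
  rw [meanPoly, finsetSum_coeff]
  simp only [coeff_monomial, Finset.sum_ite_eq', Finset.mem_range, Nat.lt_succ_iff, meanWeight]
  split_ifs <;> simp

theorem sigmaMu_eq_aeval_meanPoly (μ : ℝ) (z : ℂ) :
    sigmaMu b c μ n z = aeval z (meanPoly (cesB b c) μ n) := by
  rw [sigmaMu, meanPoly, map_sum]
  refine Finset.sum_congr rfl fun k hk => ?_
  rw [aeval_monomial, meanWeight, if_pos (Finset.mem_range_succ_iff.1 hk), poch_div_factorial,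
    coe_algebraMap]

end Cesaro

/-- For `b ≥ max{c, 2c-1} > 0` and `μ ∈ [-1,1]`,
`(1-z)^μ σ_n^{(b-1,c)}(f_μ, z) ≺ (1-z)^μ` for every `n`. -/
theorem stmt9 (b c μ : ℝ) (hb : b ≥ max c (2 * c - 1)) (hc : 0 < max c (2 * c - 1))
    (hμ1 : -1 ≤ μ) (hμ2 : μ ≤ 1) (n : ℕ) :
    Subord (fun z => (1 - z) ^ (μ : ℂ) * sigmaMu b c μ n z)
      (fun z => (1 - z) ^ (μ : ℂ)) := by
  have hcb : c ≤ b := (le_max_left _ _).trans hb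
  have hcb' : 2 * c - 1 ≤ b := (le_max_right _ _).trans hb
  have hc0 : 0 < c := by rcases lt_max_iff.1 hc with h | h <;> linarith
  have cesB_nonneg (k : ℕ) : 0 ≤ cesB b c k := (cesB_pos hc0 hcb k).le
  simp only [sigmaMu_eq_aeval_meanPoly]
  exact subord_of_antitone_weights ⟨hμ1, hμ2⟩ (meanWeight_zero (cesB_pos hc0 hcb n).ne')
    (antitone_meanWeight cesB_nonneg (monotone_cesB hc0 hcb hcb'))
    (meanWeight_nonneg cesB_nonneg) (coeff_meanPoly μ)
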